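/- Let S be a uniquely ergodic continuous map of a compact metric space Y, with unique S-invariant Borel probability measure ν, and assume that (Y,ν,S) has quasi-discrete spectrum. Let u : ℕ → ℂ be multiplicative with |u(n)| ≤ 1 for all n, and assume additionally that (1/N) Σ_{n ≤ N} u(n) → 0 as N → ∞. Then for every continuous f : Y → ℂ (without any assumption on ∫_Y f dν) and every y ∈ Y, one has (1/N) Σ_{n ≤ N} f(Sⁿy) u(n) → 0 as N → ∞. -/

import Mathlib

open MeasureTheory Filter

/-- `c` is an eigenvalue of `T` w.r.t. `μ`: there is a nonzero `f ∈ L²(μ)` with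
`f ∘ T = c · f` a.e. -/
def IsEigenvalue {X : Type*} [MeasurableSpace X] (T : X → X) (μ : Measure X) (c : ℂ) : Prop :=
  ∃ f : X → ℂ, MemLp f 2 μ ∧ ¬ (f =ᵐ[μ] 0) ∧
    (fun x => f (T x)) =ᵐ[μ] (fun x => c * f x)

/-- The quasi-eigenfunction groups `E_k(T)`: `E₀(T)` consists of the constant functions of
modulus 1 whose value is an eigenvalue of `T`, and
`E_k(T) = {f measurable, |f| = 1 a.e., (f ∘ T)/f ∈ E_{k-1}(T)}`. -/
def quasiEigenfunctions {X : Type*} [MeasurableSpace X] (T : X → X) (μ : Measure X) :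
    ℕ → Set (X → ℂ)
  | 0 => {f | ∃ c : ℂ, ‖c‖ = 1 ∧ IsEigenvalue T μ c ∧ f = fun _ => c}
  | (k+1) => {f | Measurable f ∧ (∀ᵐ x ∂μ, ‖f x‖ = 1) ∧
      (fun x => f (T x) / f x) ∈ quasiEigenfunctions T μ k}

/-- `T` is totally ergodic: every nonzero power of `T` is ergodic. -/
def TotallyErgodic {X : Type*} [MeasurableSpace X] (T : X → X) (μ : Measure X) : Prop :=
  ∀ m : ℕ, m ≠ 0 → Ergodic (T^[m]) μ

/-- `(X,μ,T)` has quasi-discrete spectrum: it is totally ergodic and the linear span of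
the quasi-eigenfunctions `⋃_k E_k(T)` is dense in `L²(X,μ)`. -/
def QuasiDiscreteSpectrum {X : Type*} [MeasurableSpace X] (T : X → X) (μ : Measure X) : Prop :=
  TotallyErgodic T μ ∧
  Dense ((Submodule.span ℂ
      {g : Lp ℂ 2 μ | ∃ k : ℕ, ∃ f ∈ quasiEigenfunctions T μ k, ⇑g =ᵐ[μ] f} :
        Submodule ℂ (Lp ℂ 2 μ)) : Set (Lp ℂ 2 μ))

/-- `S` is uniquely ergodic with unique invariant Borel probability measure `ν`. -/
def UniquelyErgodicWith {Y : Type*} [MeasurableSpace Y] (S : Y → Y) (ν : Measure Y) : Prop :=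
  IsProbabilityMeasure ν ∧ ν.map S = ν ∧
  ∀ μ' : Measure Y, IsProbabilityMeasure μ' → μ'.map S = μ' → μ' = ν

/-- `f` is a quasi-eigenfunction of `T` of order `d` with constant `c`: after `d` steps
`f ↦ (f ∘ T) / f` one reaches the constant function `c`. All relations hold almost everywhere. -/
def HasQuasiEigenvalue {X : Type*} [MeasurableSpace X] (T : X → X) (μ : Measure X) (c : ℂ) :
    ℕ → (X → ℂ) → Prop
  | 0, f => f =ᵐ[μ] fun _ => c
  | d + 1, f => AEMeasurable f μ ∧ (∀ᵐ x ∂μ, ‖f x‖ = 1) ∧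
      HasQuasiEigenvalue T μ c d (fun x => f (T x) / f x)

namespace HasQuasiEigenvalue

variable {X Z : Type*} [MeasurableSpace X] [MeasurableSpace Z] {T : X → X} {μ : Measure X}
  {R : Z → Z} {ρ : Measure Z} {c c' : ℂ} {d : ℕ} {f g : X → ℂ}

theorem congr_ae (hT : MeasurePreserving T μ μ) (hf : HasQuasiEigenvalue T μ c d f)
    (hfg : f =ᵐ[μ] g) : HasQuasiEigenvalue T μ c d g := by
  induction d generalizing f g with
  | zero => exact hfg.symm.trans hf
  | succ d ih =>
    obtain ⟨hm, h1, h2⟩ := hf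
    refine ⟨hm.congr hfg, ?_, ih h2 ?_⟩
    · filter_upwards [hfg, h1] with x hx hx1
      rwa [← hx]
    · filter_upwards [hfg, hT.quasiMeasurePreserving.ae_eq_comp hfg] with x hx hx'
      simp only [Function.comp_apply] at hx'
      rw [hx, hx']

theorem mul (hf : HasQuasiEigenvalue T μ c d f) (hg : HasQuasiEigenvalue T μ c' d g) :
    HasQuasiEigenvalue T μ (c * c') d (fun x => f x * g x) := by
  induction d generalizing f g with
  | zero => exact Filter.EventuallyEq.mul hf hg
  | succ d ih =>
    obtain ⟨hm, h1, h2⟩ := hf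
    obtain ⟨hm', h1', h2'⟩ := hg
    refine ⟨hm.mul hm', ?_, ?_⟩
    · filter_upwards [h1, h1'] with x hx hx'
      simp [hx, hx']
    · simpa only [div_mul_div_comm] using ih h2 h2'

theorem one : HasQuasiEigenvalue T μ 1 d (fun _ => 1) := by
  induction d with
  | zero => exact Filter.EventuallyEq.rfl
  | succ d ih => exact ⟨aemeasurable_const, by simp, by simpa using ih⟩

theorem conj (hf : HasQuasiEigenvalue T μ c d f) :
    HasQuasiEigenvalue T μ (starRingEnd ℂ c) d (fun x => starRingEnd ℂ (f x)) := by
  induction d generalizing f with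
  | zero => exact Filter.EventuallyEq.fun_comp hf (starRingEnd ℂ)
  | succ d ih =>
    obtain ⟨hm, h1, h2⟩ := hf
    refine ⟨Complex.continuous_conj.measurable.comp_aemeasurable hm, by simpa using h1, ?_⟩
    simpa only [map_div₀] using ih h2

/-- Quasi-eigenfunctions pull back under factor maps. -/
theorem comp_factor {π : Z → X} (hπ : MeasurePreserving π ρ μ) (hcomm : ∀ z, π (R z) = T (π z))
    (hf : HasQuasiEigenvalue T μ c d f) : HasQuasiEigenvalue R ρ c d (fun z => f (π z)) := by
  induction d generalizing f with
  | zero => exact hπ.quasiMeasurePreserving.ae_eq_comp hf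
  | succ d ih =>
    obtain ⟨hm, h1, h2⟩ := hf
    refine ⟨hm.comp_quasiMeasurePreserving hπ.quasiMeasurePreserving,
      hπ.quasiMeasurePreserving.ae h1, ?_⟩
    simpa only [hcomm] using ih h2

/-- The multiplicative `n`-step difference of a quasi-eigenfunction has lower order. -/
theorem iterate_div (hT : MeasurePreserving T μ μ) (hf : HasQuasiEigenvalue T μ c (d + 1) f)
    (n : ℕ) : HasQuasiEigenvalue T μ (c ^ n) d (fun x => f (T^[n] x) / f x) := by
  obtain ⟨-, h1, h2⟩ := hf
  induction n with
  | zero =>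
    rw [pow_zero]
    refine one.congr_ae hT ?_
    filter_upwards [h1] with x hx
    have : f x ≠ 0 := by rw [← norm_ne_zero_iff, hx]; exact one_ne_zero
    simp [this]
  | succ n ih =>
    have hTn := hT.iterate n
    have key := h2.comp_factor (R := T) hTn (fun z => by
      rw [← Function.iterate_succ_apply, Function.iterate_succ_apply'])
    rw [pow_succ]
    refine (ih.mul key).congr_ae hT ?_
    filter_upwards [hTn.quasiMeasurePreserving.ae h1] with x hx
    have : f (T^[n] x) ≠ 0 := by rw [← norm_ne_zero_iff, hx]; exact one_ne_zero
    rw [Function.iterate_succ_apply']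
    field_simp

theorem iterate (hT : MeasurePreserving T μ μ) (hf : HasQuasiEigenvalue T μ c d f) (n : ℕ) :
    HasQuasiEigenvalue (T^[n]) μ (c ^ n ^ d) d f := by
  induction d generalizing c f with
  | zero => simpa [HasQuasiEigenvalue] using hf
  | succ d ih =>
    refine ⟨hf.1, hf.2.1, ?_⟩
    rw [pow_succ', pow_mul]
    exact ih (hf.iterate_div hT n)

theorem integral_eq_zero [IsProbabilityMeasure μ] (hT : MeasurePreserving T μ μ)
    (hc : ∀ m : ℕ, m ≠ 0 → c ^ m ≠ 1) (hf : HasQuasiEigenvalue T μ c (d + 1) f) :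
    ∫ x, f x ∂μ = 0 := by
  induction d generalizing c f with
  | zero =>
    obtain ⟨hm, h1, h2⟩ := hf
    have h3 : ∫ x, f (T x) ∂μ = c * ∫ x, f x ∂μ := by
      rw [← integral_const_mul]
      refine integral_congr_ae ?_
      filter_upwards [h1, h2] with x hx hx2
      have : f x ≠ 0 := by rw [← norm_ne_zero_iff, hx]; exact one_ne_zero
      rwa [div_eq_iff this] at hx2
    have h4 : ∫ x, f (T x) ∂μ = ∫ x, f x ∂μ := by
      have := integral_map (f := f) hT.aemeasurable
        (by rw [hT.map_eq]; exact hm.aestronglyMeasurable)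
      rw [hT.map_eq] at this
      exact this.symm
    have hc1 : c ≠ 1 := by simpa using hc 1 one_ne_zero
    have h5 : (c - 1) * ∫ x, f x ∂μ = 0 := by rw [sub_mul, one_mul, ← h3, h4, sub_self]
    exact (mul_eq_zero.1 h5).resolve_left (sub_ne_zero.2 hc1)
  | succ d ih =>
    have hm := hf.1
    have h1 := hf.2.1
    have hmem : ∀ n : ℕ, MemLp (fun x => f (T^[n] x)) 2 μ := fun n => by
      have hTn := hT.iterate n
      refine MemLp.of_bound (hm.comp_quasiMeasurePreserving
        hTn.quasiMeasurePreserving).aestronglyMeasurable 1 ?_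
      filter_upwards [hTn.quasiMeasurePreserving.ae h1] with x hx using hx.le
    have hshift : ∀ n : ℕ, ∀ h : X → ℂ, AEMeasurable h μ →
        ∫ x, h (T^[n] x) ∂μ = ∫ x, h x ∂μ := fun n h hh => by
      have hTn := hT.iterate n
      have := integral_map (f := h) hTn.aemeasurable
        (by rw [hTn.map_eq]; exact hh.aestronglyMeasurable)
      rw [hTn.map_eq] at this
      exact this.symm
    have hmeas : ∀ n, AEMeasurable (fun x => f (T^[n] x)) μ := fun n =>
      hm.comp_quasiMeasurePreserving (hT.iterate n).quasiMeasurePreserving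
    have hinner : ∀ n m : ℕ, inner ℂ ((hmem n).toLp _) ((hmem m).toLp _) =
        ∫ x, f (T^[m] x) * starRingEnd ℂ (f (T^[n] x)) ∂μ := fun n m => by
      rw [L2.inner_def]
      refine integral_congr_ae ?_
      filter_upwards [(hmem n).coeFn_toLp, (hmem m).coeFn_toLp] with x hx hx'
      rw [hx, hx', RCLike.inner_apply]
    have hlt : ∀ n h : ℕ, h ≠ 0 →
        ∫ x, f (T^[n + h] x) * starRingEnd ℂ (f (T^[n] x)) ∂μ = 0 := fun n h hh => by
      have e1 := hshift n (fun x => f (T^[h] x) * starRingEnd ℂ (f x))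
        ((hmeas h).mul (Complex.continuous_conj.measurable.comp_aemeasurable hm))
      simp only [← Function.iterate_add_apply] at e1
      rw [add_comm n h, e1, ← ih (c := c ^ h) _ (hf.iterate_div hT h)]
      · refine integral_congr_ae ?_
        filter_upwards [h1] with x hx
        rw [div_eq_mul_inv, Complex.inv_def, Complex.normSq_eq_norm_sq, hx]
        simp
      · intro m hm0
        rw [← pow_mul]
        exact hc _ (mul_ne_zero hh hm0)
    have horth : Orthonormal ℂ (fun n => (hmem n).toLp _) := by
      rw [orthonormal_iff_ite]
      intro n m
      rw [hinner]
      split_ifs with hnm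
      · subst hnm
        rw [integral_congr_ae (g := fun _ => (1 : ℂ)), integral_const]
        · simp
        · filter_upwards [(hT.iterate n).quasiMeasurePreserving.ae h1] with x hx
          rw [Complex.mul_conj, Complex.normSq_eq_norm_sq, hx]
          simp
      · rcases lt_or_gt_of_ne hnm with h | h
        · obtain ⟨k, rfl⟩ := Nat.exists_eq_add_of_lt h
          exact hlt n (k + 1) (Nat.succ_ne_zero k)
        · obtain ⟨k, rfl⟩ := Nat.exists_eq_add_of_lt h
          have := congrArg (starRingEnd ℂ) (hlt m (k + 1) (Nat.succ_ne_zero k))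
          rw [← integral_conj, map_zero] at this
          rw [← this]
          refine integral_congr_ae (Filter.Eventually.of_forall fun x => ?_)
          simp [mul_comm, add_assoc]
    have hone : MemLp (fun _ : X => (1 : ℂ)) 2 μ := memLp_const 1
    have hval : ∀ n : ℕ, inner ℂ ((hmem n).toLp _) (hone.toLp _) =
        starRingEnd ℂ (∫ x, f x ∂μ) := fun n => by
      rw [L2.inner_def, ← hshift n f hm, ← integral_conj]
      refine integral_congr_ae ?_
      filter_upwards [(hmem n).coeFn_toLp, hone.coeFn_toLp] with x hx hx'
      rw [hx, hx', RCLike.inner_apply, one_mul]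
    have hlim := (horth.inner_products_summable (hone.toLp _)).tendsto_atTop_zero
    simp only [hval, RCLike.norm_conj] at hlim
    simpa using tendsto_nhds_unique tendsto_const_nhds hlim

end HasQuasiEigenvalue

theorem HasQuasiEigenvalue.norm_eq_one {X : Type*} [MeasurableSpace X] {T : X → X}
    {μ : Measure X} [IsProbabilityMeasure μ] {c : ℂ} {d : ℕ} {f : X → ℂ}
    (hT : MeasurePreserving T μ μ) (hf : HasQuasiEigenvalue T μ c (d + 1) f) : ‖c‖ = 1 := by
  induction d generalizing f with
  | zero =>
    obtain ⟨-, h1, h2⟩ := hf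
    obtain ⟨x, hx, hx', hx2⟩ := (h1.and ((hT.quasiMeasurePreserving.ae h1).and h2)).exists
    replace hx2 : f (T x) / f x = c := hx2
    rw [← hx2, norm_div, hx, hx', div_one]
  | succ d ih => exact ih hf.2.2

theorem pow_mul_conj_pow_pow_ne_one {c : ℂ} (hc1 : ‖c‖ = 1) (hc : ∀ m : ℕ, m ≠ 0 → c ^ m ≠ 1)
    {a b : ℕ} (hab : a ≠ b) {m : ℕ} (hm : m ≠ 0) :
    (c ^ a * starRingEnd ℂ (c ^ b)) ^ m ≠ 1 := by
  have h0 : c ≠ 0 := by rw [← norm_ne_zero_iff, hc1]; exact one_ne_zero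
  have hinv : starRingEnd ℂ (c ^ b) = (c ^ b)⁻¹ := by
    rw [Complex.inv_def, Complex.normSq_eq_norm_sq, norm_pow, hc1]
    simp
  rw [hinv, ← div_eq_mul_inv]
  intro h
  rw [div_pow, div_eq_one_iff_eq (pow_ne_zero _ (pow_ne_zero _ h0)), ← pow_mul, ← pow_mul] at h
  rcases lt_or_gt_of_ne hab with hlt | hlt
  · obtain ⟨k, rfl⟩ := Nat.exists_eq_add_of_lt hlt
    refine hc ((k + 1) * m) (mul_ne_zero (Nat.succ_ne_zero k) hm) ?_
    rw [add_assoc, add_mul, pow_add] at h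
    exact (mul_eq_left₀ (pow_ne_zero _ h0)).1 h.symm
  · obtain ⟨k, rfl⟩ := Nat.exists_eq_add_of_lt hlt
    refine hc ((k + 1) * m) (mul_ne_zero (Nat.succ_ne_zero k) hm) ?_
    rw [add_assoc, add_mul, pow_add] at h
    exact (mul_eq_left₀ (pow_ne_zero _ h0)).1 h

/-- If all invariant probability measures give a continuous function an integral of modulus at
most `C`, then its Birkhoff averages are eventually bounded by any larger constant. -/
theorem eventually_norm_birkhoff_sum_le {Z : Type*} [MetricSpace Z] [CompactSpace Z]
    [MeasurableSpace Z] [BorelSpace Z] {R : Z → Z} (hR : Continuous R) (z : Z) {φ : Z → ℂ}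
    (hφ : Continuous φ) {C ε : ℝ}
    (hC : ∀ ρ : Measure Z, IsProbabilityMeasure ρ → MeasurePreserving R ρ ρ → ‖∫ x, φ x ∂ρ‖ ≤ C)
    (hε : C < ε) :
    ∀ᶠ N : ℕ in atTop, ‖∑ n ∈ Finset.Icc 1 N, φ (R^[n] z)‖ ≤ ε * N := by
  have hemp : ∀ N : ℕ, ∃ m : ProbabilityMeasure Z, N ≠ 0 → ∀ ψ : Z → ℂ, Continuous ψ →
      ∫ x, ψ x ∂(m : Measure Z) = (N : ℂ)⁻¹ * ∑ n ∈ Finset.Icc 1 N, ψ (R^[n] z) := by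
    intro N
    by_cases hN : N = 0
    · exact ⟨⟨Measure.dirac z, inferInstance⟩, fun h => absurd hN h⟩
    · refine ⟨⟨(N : ENNReal)⁻¹ • ∑ n ∈ Finset.Icc 1 N, Measure.dirac (R^[n] z), ⟨?_⟩⟩, ?_⟩
      · simp [ENNReal.inv_mul_cancel, hN]
      · intro _ ψ hψ
        rw [ProbabilityMeasure.coe_mk, integral_smul_measure, integral_finsetSum_measure]
        · simp [integral_dirac]
        · intro i _
          exact hψ.integrable_of_hasCompactSupport (HasCompactSupport.of_compactSpace ψ)
  choose m hm using hemp
  by_contra hcon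
  rw [not_eventually] at hcon
  have hne : (atTop ⊓ 𝓟 {N : ℕ | ¬ ‖∑ n ∈ Finset.Icc 1 N, φ (R^[n] z)‖ ≤ ε * N}).NeBot :=
    frequently_mem_iff_neBot.1 hcon
  obtain ⟨U, hU⟩ := exists_ultrafilter_le
    (atTop ⊓ 𝓟 {N : ℕ | ¬ ‖∑ n ∈ Finset.Icc 1 N, φ (R^[n] z)‖ ≤ ε * N})
  have hUtop : (U : Filter ℕ) ≤ atTop := hU.trans inf_le_left
  have hUbad : ∀ᶠ N in (U : Filter ℕ), ¬ ‖∑ n ∈ Finset.Icc 1 N, φ (R^[n] z)‖ ≤ ε * N :=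
    hU.trans inf_le_right (mem_principal_self _)
  have hUpos : ∀ᶠ N in (U : Filter ℕ), N ≠ 0 := hUtop (eventually_ne_atTop 0)
  obtain ⟨ρ, -, hρ⟩ := isCompact_univ.ultrafilter_le_nhds (U.map m) (by simp)
  have hlim : ∀ ψ : Z → ℂ, Continuous ψ →
      Tendsto (fun N : ℕ => (N : ℂ)⁻¹ * ∑ n ∈ Finset.Icc 1 N, ψ (R^[n] z)) U
        (nhds (∫ x, ψ x ∂(ρ : Measure Z))) := by
    intro ψ hψ
    have h := (ProbabilityMeasure.tendsto_iff_forall_integral_rclike_tendsto ℂ).1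
      (show Tendsto m U (nhds ρ) from hρ) (BoundedContinuousFunction.mkOfCompact ⟨ψ, hψ⟩)
    refine h.congr' ?_
    filter_upwards [hUpos] with N hN
    exact hm N hN ψ hψ
  have hinv : MeasurePreserving R (ρ : Measure Z) ρ := by
    refine ⟨hR.measurable, ?_⟩
    have : IsProbabilityMeasure ((ρ : Measure Z).map R) :=
      Measure.isProbabilityMeasure_map hR.aemeasurable
    refine ext_of_forall_integral_eq_of_IsFiniteMeasure fun ψ => ?_
    rw [integral_map hR.aemeasurable ψ.continuous.aestronglyMeasurable]
    let ψ' : Z → ℂ := fun x => (ψ x : ℂ)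
    have hψ' : Continuous ψ' := Complex.continuous_ofReal.comp ψ.continuous
    have h1 := hlim ψ' hψ'
    have h2 := hlim (fun x => ψ' (R x)) (hψ'.comp hR)
    have h3 : Tendsto (fun N : ℕ => (N : ℂ)⁻¹ * (ψ' (R^[N + 1] z) - ψ' (R z))) U (nhds 0) := by
      refine Tendsto.mono_left ?_ hUtop
      refine squeeze_zero_norm (a := fun N : ℕ => (N : ℝ)⁻¹ * (2 * ‖ψ‖)) (fun N => ?_) ?_
      · rw [norm_mul, norm_inv, Complex.norm_natCast]
        gcongr
        refine (norm_sub_le _ _).trans ?_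
        rw [two_mul]
        gcongr
        · simpa [ψ'] using ψ.norm_coe_le_norm (R^[N + 1] z)
        · simpa [ψ'] using ψ.norm_coe_le_norm (R z)
      · simpa using (tendsto_inv_atTop_nhds_zero_nat (𝕜 := ℝ)).mul_const (2 * ‖ψ‖)
    have h4 : ∫ x, ψ' (R x) ∂(ρ : Measure Z) - ∫ x, ψ' x ∂(ρ : Measure Z) = 0 := by
      refine tendsto_nhds_unique ((h2.sub h1).congr fun N => ?_) h3
      rw [← mul_sub, ← Finset.sum_sub_distrib]
      congr 1
      induction N with
      | zero => simp
      | succ N ih =>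
        rw [Finset.sum_Icc_succ_top (by omega), ih, ← Function.iterate_succ_apply' R (N + 1)]
        ring
    rw [sub_eq_zero, integral_complex_ofReal] at h4
    simp only [ψ'] at h4
    rw [integral_complex_ofReal] at h4
    exact_mod_cast h4
  refine absurd (hC ρ inferInstance hinv) (not_le.2 (hε.trans_le ?_))
  refine ge_of_tendsto (hlim φ hφ).norm ?_
  filter_upwards [hUbad, hUpos] with N hN hN0
  have hpos : (0 : ℝ) < N := by exact_mod_cast Nat.pos_of_ne_zero hN0
  rw [norm_mul, norm_inv, Complex.norm_natCast, inv_mul_eq_div, le_div_iff₀ hpos]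
  exact (not_le.1 hN).le

/-- Under unique ergodicity and ergodicity of a power of `S`, that power is uniquely ergodic. -/
theorem UniquelyErgodicWith.eq_of_measurePreserving_iterate {Y : Type*} [MeasurableSpace Y]
    {S : Y → Y} (hS : Measurable S) {ν : Measure Y} (huniq : UniquelyErgodicWith S ν) {p : ℕ}
    (hp : p ≠ 0) (herg : Ergodic (S^[p]) ν) {μ : Measure Y} [IsProbabilityMeasure μ]
    (hμ : MeasurePreserving (S^[p]) μ μ) : μ = ν := by
  obtain ⟨hν, -, huniq⟩ := huniq
  have hsum : (p : ENNReal)⁻¹ • ∑ i ∈ Finset.range p, μ.map (S^[i]) = ν := by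
    refine huniq _ ⟨?_⟩ ?_
    · have : ∀ i, (μ.map (S^[i])) Set.univ = 1 := fun i => by
        rw [Measure.map_apply (hS.iterate i) MeasurableSet.univ]; simp
      simp [this, ENNReal.inv_mul_cancel, hp]
    · rw [Measure.map_smul]
      congr 1
      rw [← Measure.mapₗ_apply_of_measurable hS, map_sum]
      simp only [Measure.mapₗ_apply_of_measurable hS, Measure.map_map hS (hS.iterate _),
        ← Function.iterate_succ']
      have h1 := Finset.sum_range_succ (fun i => μ.map (S^[i])) p
      have h2 := Finset.sum_range_succ' (fun i => μ.map (S^[i])) p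
      rw [hμ.map_eq] at h1
      simp only [Function.iterate_zero, Measure.map_id] at h2
      rw [h1] at h2
      ext s hs
      have h3 := congrArg (fun m : Measure Y => m s) h2
      simp only [Measure.add_apply] at h3
      exact ((ENNReal.add_left_inj (measure_ne_top μ s)).1 h3).symm
  refine herg.eq_of_absolutelyContinuous hμ ?_
  intro s hs
  rw [← hsum, Measure.smul_apply, smul_eq_mul, mul_eq_zero, Measure.finsetSum_apply,
    Finset.sum_eq_zero_iff] at hs
  have := (hs.resolve_left (by simp)) 0 (Finset.mem_range.2 (Nat.pos_of_ne_zero hp))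
  simpa using this

/-- A quasi-eigenfunction is either constant, or reduces after at least one multiplicative
difference to a constant which is not a root of unity. -/
theorem quasiEigenfunctions_const_or {X : Type*} [MeasurableSpace X] {T : X → X} {μ : Measure X}
    [IsProbabilityMeasure μ] (hT : TotallyErgodic T μ) {k : ℕ} {f : X → ℂ}
    (hf : f ∈ quasiEigenfunctions T μ k) :
    (∃ c : ℂ, f =ᵐ[μ] fun _ => c) ∨
      ∃ d : ℕ, ∃ c : ℂ, (∀ m : ℕ, m ≠ 0 → c ^ m ≠ 1) ∧ HasQuasiEigenvalue T μ c (d + 1) f := by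
  have hTm : MeasurePreserving T μ μ := by
    simpa using (hT 1 one_ne_zero).toMeasurePreserving
  induction k generalizing f with
  | zero =>
    obtain ⟨c, -, -, rfl⟩ := hf
    exact Or.inl ⟨c, Filter.EventuallyEq.rfl⟩
  | succ k ih =>
    obtain ⟨hm, h1, h2⟩ := hf
    rcases ih h2 with ⟨c, hc⟩ | ⟨d, c, hc, h⟩
    · have hq : HasQuasiEigenvalue T μ c 1 f := ⟨hm.aemeasurable, h1, hc⟩
      by_cases hroot : ∀ m : ℕ, m ≠ 0 → c ^ m ≠ 1
      · exact Or.inr ⟨0, c, hroot, hq⟩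
      · push Not at hroot
        obtain ⟨m, hm0, hcm⟩ := hroot
        left
        have h3 := hq.iterate_div hTm m
        rw [hcm] at h3
        refine (hT m hm0).quasiErgodic.ae_eq_const_of_ae_eq_comp_ae hm.aestronglyMeasurable ?_
        filter_upwards [h1, h3] with x hx hx3
        have : f x ≠ 0 := by rw [← norm_ne_zero_iff, hx]; exact one_ne_zero
        rwa [div_eq_one_iff_eq this] at hx3
    · exact Or.inr ⟨d + 1, c, hc, hm.aemeasurable, h1, h⟩

theorem norm_mul_conj_le_of_norm_le_one {a a' b b' : ℂ} (ha : ‖a‖ ≤ 1) (hb' : ‖b'‖ ≤ 1) :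
    ‖a' * starRingEnd ℂ b' - a * starRingEnd ℂ b‖ ≤ ‖a - a'‖ + ‖b - b'‖ := by
  have : a' * starRingEnd ℂ b' - a * starRingEnd ℂ b =
      -((a - a') * starRingEnd ℂ b') - a * starRingEnd ℂ (b - b') := by
    rw [map_sub]; ring
  rw [this]
  refine (norm_sub_le _ _).trans ?_
  rw [norm_neg, norm_mul, norm_mul, RCLike.norm_conj, RCLike.norm_conj]
  gcongr
  · exact mul_le_of_le_one_right (norm_nonneg _) hb'
  · exact mul_le_of_le_one_left (norm_nonneg _) ha

/-- Along two different powers of `S`, a continuous function close to a quasi-eigenfunction is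
asymptotically almost orthogonal to itself. -/
theorem eventually_norm_sum_mul_conj_le {Y : Type*} [MetricSpace Y] [CompactSpace Y]
    [MeasurableSpace Y] [BorelSpace Y] {S : Y → Y} (hScont : Continuous S) {ν : Measure Y}
    (huniq : UniquelyErgodicWith S ν) (herg : TotallyErgodic S ν) {c : ℂ} {d : ℕ} {g g' : Y → ℂ}
    (hc : ∀ m : ℕ, m ≠ 0 → c ^ m ≠ 1) (hg : HasQuasiEigenvalue S ν c (d + 1) g)
    (hg'c : Continuous g') (hg'1 : ∀ x, ‖g' x‖ ≤ 1) {η ε : ℝ}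
    (hη : ∫ x, ‖g x - g' x‖ ∂ν ≤ η) (hε : 2 * η < ε) (y : Y) {p q : ℕ} (hp : p ≠ 0) (hq : q ≠ 0)
    (hpq : p ≠ q) :
    ∀ᶠ N : ℕ in atTop, ‖∑ n ∈ Finset.Icc 1 N,
      g' (S^[p * n] y) * starRingEnd ℂ (g' (S^[q * n] y))‖ ≤ ε * N := by
  have hν := huniq.1
  have hSm : MeasurePreserving S ν ν := ⟨hScont.measurable, huniq.2.1⟩
  have hiter : ∀ n, (Prod.map (S^[p]) (S^[q]))^[n] (y, y) = (S^[p * n] y, S^[q * n] y) := by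
    intro n
    rw [Prod.map_iterate, Prod.map_apply, ← Function.iterate_mul, ← Function.iterate_mul]
  have hφ : Continuous fun x : Y × Y => g' x.1 * starRingEnd ℂ (g' x.2) := by fun_prop
  have key := eventually_norm_birkhoff_sum_le ((hScont.iterate p).prodMap (hScont.iterate q))
    (y, y) hφ (C := 2 * η) (ε := ε) ?_ hε
  · simpa only [hiter] using key
  intro ρ hρ hρinv
  have hfst : MeasurePreserving Prod.fst ρ ν := by
    refine ⟨measurable_fst, ?_⟩
    have : IsProbabilityMeasure (ρ.map Prod.fst) :=
      Measure.isProbabilityMeasure_map measurable_fst.aemeasurable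
    refine huniq.eq_of_measurePreserving_iterate hScont.measurable hp (herg p hp)
      ⟨hScont.measurable.iterate p, ?_⟩
    rw [Measure.map_map (hScont.measurable.iterate p) measurable_fst]
    conv_rhs => rw [← hρinv.map_eq, Measure.map_map measurable_fst hρinv.measurable]
    rfl
  have hsnd : MeasurePreserving Prod.snd ρ ν := by
    refine ⟨measurable_snd, ?_⟩
    have : IsProbabilityMeasure (ρ.map Prod.snd) :=
      Measure.isProbabilityMeasure_map measurable_snd.aemeasurable
    refine huniq.eq_of_measurePreserving_iterate hScont.measurable hq (herg q hq)
      ⟨hScont.measurable.iterate q, ?_⟩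
    rw [Measure.map_map (hScont.measurable.iterate q) measurable_snd]
    conv_rhs => rw [← hρinv.map_eq, Measure.map_map measurable_snd hρinv.measurable]
    rfl
  have hF : HasQuasiEigenvalue (Prod.map (S^[p]) (S^[q])) ρ
      (c ^ p ^ (d + 1) * starRingEnd ℂ (c ^ q ^ (d + 1))) (d + 1)
      (fun x => g x.1 * starRingEnd ℂ (g x.2)) :=
    ((hg.iterate hSm p).comp_factor hfst fun _ => rfl).mul
      ((hg.iterate hSm q).comp_factor hsnd fun _ => rfl).conj
  have hF0 := hF.integral_eq_zero hρinv fun m hm =>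
    pow_mul_conj_pow_pow_ne_one (hg.norm_eq_one hSm) hc
      (fun h => hpq (Nat.pow_left_injective (Nat.succ_ne_zero d) h)) hm
  have hgint : Integrable (fun x => g x - g' x) ν := by
    refine Integrable.sub ?_ (hg'c.integrable_of_hasCompactSupport (.of_compactSpace g'))
    exact Integrable.of_bound hg.1.aestronglyMeasurable 1
      (by filter_upwards [hg.2.1] with x hx using hx.le)
  have hFint : Integrable (fun x : Y × Y => g x.1 * starRingEnd ℂ (g x.2)) ρ :=
    Integrable.of_bound hF.1.aestronglyMeasurable 1
      (by filter_upwards [hF.2.1] with x hx using hx.le)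
  have hφint : Integrable (fun x : Y × Y => g' x.1 * starRingEnd ℂ (g' x.2)) ρ :=
    hφ.integrable_of_hasCompactSupport (.of_compactSpace _)
  rw [← sub_zero (∫ x, _ ∂ρ), ← hF0, ← integral_sub hφint hFint]
  have hi1 : Integrable (fun x : Y × Y => ‖g x.1 - g' x.1‖) ρ :=
    hfst.integrable_comp_of_integrable hgint.norm
  have hi2 : Integrable (fun x : Y × Y => ‖g x.2 - g' x.2‖) ρ :=
    hsnd.integrable_comp_of_integrable hgint.norm
  have hmarg : ∀ π : Y × Y → Y, MeasurePreserving π ρ ν →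
      ∫ x, ‖g (π x) - g' (π x)‖ ∂ρ = ∫ x, ‖g x - g' x‖ ∂ν := fun π hπ => by
    rw [← hπ.map_eq, integral_map hπ.aemeasurable]
    rw [hπ.map_eq]
    exact hgint.norm.aestronglyMeasurable
  calc ‖∫ x, (g' x.1 * starRingEnd ℂ (g' x.2) - g x.1 * starRingEnd ℂ (g x.2)) ∂ρ‖
      ≤ ∫ x, (‖g x.1 - g' x.1‖ + ‖g x.2 - g' x.2‖) ∂ρ := by
        refine norm_integral_le_of_norm_le (hi1.add hi2) ?_
        filter_upwards [hfst.quasiMeasurePreserving.ae hg.2.1] with x hx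
        exact norm_mul_conj_le_of_norm_le_one hx.le (hg'1 _)
    _ = 2 * ∫ x, ‖g x - g' x‖ ∂ν := by
        rw [integral_add hi1 hi2, hmarg _ hfst, hmarg _ hsnd, two_mul]
    _ ≤ 2 * η := by gcongr

theorem sum_Icc_ite_dvd (N p : ℕ) :
    ∑ n ∈ Finset.Icc 1 N, (if p ∣ n then (1 : ℝ) else 0) = ((N / p : ℕ) : ℝ) := by
  rw [Finset.sum_boole, ← Nat.Ioc_filter_dvd_card_eq_div]
  rfl

theorem sum_Icc_ite_dvd_eq {p : ℕ} (hp : p ≠ 0) (N : ℕ) (h : ℕ → ℂ) :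
    ∑ n ∈ Finset.Icc 1 N, (if p ∣ n then h n else 0) =
      ∑ m ∈ Finset.Icc 1 N, if p * m ≤ N then h (p * m) else 0 := by
  rw [← Finset.sum_filter, ← Finset.sum_filter]
  have hp' := Nat.pos_of_ne_zero hp
  refine (Finset.sum_nbij (fun m => p * m) ?_ ?_ ?_ fun _ _ => rfl).symm
  · intro m hm
    simp only [Finset.mem_filter, Finset.mem_Icc] at hm ⊢
    exact ⟨⟨Nat.mul_pos hp' hm.1.1, hm.2⟩, dvd_mul_right _ _⟩
  · intro m _ m' _ h
    exact Nat.eq_of_mul_eq_mul_left hp' h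
  · intro n hn
    simp only [Finset.coe_filter, Finset.mem_Icc, Set.mem_ofPred_eq] at hn
    obtain ⟨⟨h1, h2⟩, m, rfl⟩ := hn
    refine ⟨m, ?_, rfl⟩
    simp only [Finset.coe_filter, Finset.mem_Icc, Set.mem_ofPred_eq]
    refine ⟨⟨Nat.pos_of_ne_zero ?_, (Nat.le_mul_of_pos_left m hp').trans h2⟩, h2⟩
    rintro rfl
    simp at h1

/-- The Turán–Kubilius inequality for a finite set of primes. -/
theorem turan_kubilius {P : Finset ℕ} (hP : ∀ p ∈ P, p.Prime) (N : ℕ) :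
    ∑ n ∈ Finset.Icc 1 N,
        ((∑ p ∈ P, if p ∣ n then (1 : ℝ) else 0) - ∑ p ∈ P, (p : ℝ)⁻¹) ^ 2 ≤
      N * ∑ p ∈ P, (p : ℝ)⁻¹ + 2 * (∑ p ∈ P, (p : ℝ)⁻¹) * P.card := by
  set L : ℝ := ∑ p ∈ P, (p : ℝ)⁻¹ with hL
  have hL0 : 0 ≤ L := Finset.sum_nonneg fun p _ => by positivity
  have hfirst : (N : ℝ) * L - P.card ≤
      ∑ n ∈ Finset.Icc 1 N, ∑ p ∈ P, (if p ∣ n then (1 : ℝ) else 0) := by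
    rw [Finset.sum_comm]
    simp only [sum_Icc_ite_dvd]
    rw [hL, Finset.mul_sum, Finset.card_eq_sum_ones, Nat.cast_sum, ← Finset.sum_sub_distrib]
    refine Finset.sum_le_sum fun p hp => ?_
    rw [← div_eq_mul_inv, Nat.cast_one, ← Nat.floor_div_eq_div (K := ℝ)]
    exact (Nat.sub_one_lt_floor _).le
  have hsecond : ∑ n ∈ Finset.Icc 1 N, (∑ p ∈ P, (if p ∣ n then (1 : ℝ) else 0)) ^ 2 ≤
      N * L + N * L ^ 2 := by
    simp only [sq, Finset.sum_mul_sum]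
    rw [Finset.sum_comm]
    have hrow : ∀ p ∈ P, ∑ n ∈ Finset.Icc 1 N, ∑ q ∈ P,
        (if p ∣ n then (1 : ℝ) else 0) * (if q ∣ n then (1 : ℝ) else 0) ≤
        N * (p : ℝ)⁻¹ + ∑ q ∈ P, N * ((p : ℝ)⁻¹ * (q : ℝ)⁻¹) := by
      intro p hp
      rw [Finset.sum_comm, ← Finset.add_sum_erase _ _ hp]
      refine add_le_add ?_ ?_
      · have : ∀ n, (if p ∣ n then (1 : ℝ) else 0) * (if p ∣ n then (1 : ℝ) else 0) =
            if p ∣ n then (1 : ℝ) else 0 := fun n => by split_ifs <;> simp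
        simp only [this, sum_Icc_ite_dvd]
        rw [← div_eq_mul_inv]
        exact Nat.cast_div_le
      · refine le_trans (Finset.sum_le_sum fun q hq => ?_)
          (Finset.sum_le_sum_of_subset_of_nonneg (Finset.erase_subset p P)
            fun q _ _ => by positivity)
        have hcop : p.Coprime q :=
          (Nat.coprime_primes (hP p hp) (hP q (Finset.mem_of_mem_erase hq))).2
            (Finset.ne_of_mem_erase hq).symm
        have : ∀ n, (if p ∣ n then (1 : ℝ) else 0) * (if q ∣ n then (1 : ℝ) else 0) =
            if p * q ∣ n then (1 : ℝ) else 0 := fun n => by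
          by_cases h : p * q ∣ n
          · simp [h, dvd_of_mul_right_dvd h, dvd_of_mul_left_dvd h]
          · have : ¬ (p ∣ n ∧ q ∣ n) := fun h' => h (hcop.mul_dvd_of_dvd_of_dvd h'.1 h'.2)
            by_cases h1 : p ∣ n <;> by_cases h2 : q ∣ n <;> simp_all
        simp only [this, sum_Icc_ite_dvd]
        rw [← mul_inv, ← div_eq_mul_inv, ← Nat.cast_mul]
        exact Nat.cast_div_le
    refine (Finset.sum_le_sum hrow).trans (le_of_eq ?_)
    rw [Finset.sum_add_distrib, ← Finset.mul_sum]
    simp only [← Finset.mul_sum]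
    rw [hL, Finset.sum_mul]
  calc ∑ n ∈ Finset.Icc 1 N, ((∑ p ∈ P, if p ∣ n then (1 : ℝ) else 0) - L) ^ 2
      = ∑ n ∈ Finset.Icc 1 N, (∑ p ∈ P, if p ∣ n then (1 : ℝ) else 0) ^ 2
        - 2 * L * ∑ n ∈ Finset.Icc 1 N, (∑ p ∈ P, if p ∣ n then (1 : ℝ) else 0)
        + N * L ^ 2 := by
        rw [Finset.mul_sum, ← Finset.sum_sub_distrib]
        have : (N : ℝ) * L ^ 2 = ∑ n ∈ Finset.Icc 1 N, L ^ 2 := by simp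
        rw [this, ← Finset.sum_add_distrib]
        exact Finset.sum_congr rfl fun n _ => by ring
    _ ≤ N * L + 2 * L * P.card := by nlinarith [mul_le_mul_of_nonneg_left hfirst hL0]

theorem sum_norm_le_of_sum_sq_le {ι : Type*} (s : Finset ι) (v : ι → ℝ) {L A : ℝ} (hL : 0 < L)
    (h : ∑ i ∈ s, v i ^ 2 ≤ L * A) : ∑ i ∈ s, |v i| ≤ Real.sqrt L * ((s.card + A) / 2) := by
  have hs := Real.sqrt_pos.2 hL
  have hsq := Real.sq_sqrt hL.le
  have h1 : Real.sqrt L * ∑ i ∈ s, |v i| ≤ ∑ i ∈ s, (L + v i ^ 2) / 2 := by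
    rw [Finset.mul_sum]
    refine Finset.sum_le_sum fun i _ => ?_
    nlinarith [sq_nonneg (Real.sqrt L - |v i|), sq_abs (v i)]
  have h2 : ∑ i ∈ s, (L + v i ^ 2) / 2 = (s.card * L + ∑ i ∈ s, v i ^ 2) / 2 := by
    rw [← Finset.sum_div, Finset.sum_add_distrib, Finset.sum_const, nsmul_eq_mul]
  refine le_of_mul_le_mul_left ?_ hs
  calc Real.sqrt L * ∑ i ∈ s, |v i| ≤ (s.card * L + L * A) / 2 := by linarith
    _ = Real.sqrt L ^ 2 * ((s.card + A) / 2) := by rw [hsq]; ring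
    _ = Real.sqrt L * (Real.sqrt L * ((s.card + A) / 2)) := by ring

/-- Second moment bound for sums over dilates, from correlation bounds. -/
theorem sum_sq_norm_dilates_le {P : Finset ℕ} (hP : ∀ p ∈ P, p.Prime) {a u : ℕ → ℂ}
    (ha : ∀ n, ‖a n‖ ≤ 1) (hu : ∀ n, ‖u n‖ ≤ 1) {ε C : ℝ} (hε : 0 ≤ ε)
    (hcorr : ∀ p ∈ P, ∀ q ∈ P, p ≠ q → ∀ M : ℕ,
      ‖∑ m ∈ Finset.Icc 1 M, a (p * m) * starRingEnd ℂ (a (q * m))‖ ≤ ε * M + C) (hC : 0 ≤ C)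
    (N : ℕ) :
    ∑ m ∈ Finset.Icc 1 N, ‖∑ p ∈ P, if p * m ≤ N then u p * a (p * m) else 0‖ ^ 2 ≤
      N * ∑ p ∈ P, (p : ℝ)⁻¹ + P.card ^ 2 * (ε * N + C) := by
  have hfilter : ∀ k : ℕ, k ≠ 0 →
      (Finset.Icc 1 N).filter (fun m => k * m ≤ N) = Finset.Icc 1 (N / k) := by
    intro k hk
    have hk' := Nat.pos_of_ne_zero hk
    ext m
    simp only [Finset.mem_filter, Finset.mem_Icc, Nat.le_div_iff_mul_le hk', mul_comm k m]
    exact ⟨fun h => ⟨h.1.1, h.2⟩, fun h => ⟨⟨h.1, (Nat.le_mul_of_pos_right m hk').trans h.2⟩, h.2⟩⟩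
  let V : ℕ → ℕ → ℂ := fun p m => if p * m ≤ N then u p * a (p * m) else 0
  have hexp : ((∑ m ∈ Finset.Icc 1 N, ‖∑ p ∈ P, V p m‖ ^ 2 : ℝ) : ℂ) =
      ∑ p ∈ P, ∑ q ∈ P, ∑ m ∈ Finset.Icc 1 N, V p m * starRingEnd ℂ (V q m) := by
    push_cast
    simp only [← Complex.mul_conj', map_sum, Finset.sum_mul_sum]
    rw [Finset.sum_comm]
    exact Finset.sum_congr rfl fun p _ => Finset.sum_comm
  have hdiag : ∀ p ∈ P, ‖∑ m ∈ Finset.Icc 1 N, V p m * starRingEnd ℂ (V p m)‖ ≤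
      N * (p : ℝ)⁻¹ := by
    intro p hp
    have : ∀ m, V p m * starRingEnd ℂ (V p m) =
        if p * m ≤ N then u p * a (p * m) * starRingEnd ℂ (u p * a (p * m)) else 0 := fun m => by
      simp only [V]; split_ifs <;> simp
    simp only [this]
    rw [← Finset.sum_filter, hfilter p (hP p hp).ne_zero]
    refine (norm_sum_le_of_le (f := fun m => u p * a (p * m) * starRingEnd ℂ (u p * a (p * m)))
      (n := fun _ => (1 : ℝ)) _ fun m _ => ?_).trans ?_
    · have : ‖u p * a (p * m)‖ ≤ 1 := by
        rw [norm_mul]; exact mul_le_one₀ (hu _) (norm_nonneg _) (ha _)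
      rw [norm_mul, RCLike.norm_conj]
      exact mul_le_one₀ this (norm_nonneg _) this
    · rw [Finset.sum_const, Nat.card_Icc, nsmul_eq_mul, mul_one, ← div_eq_mul_inv]
      simpa using Nat.cast_div_le
  have hoff : ∀ p ∈ P, ∀ q ∈ P, p ≠ q →
      ‖∑ m ∈ Finset.Icc 1 N, V p m * starRingEnd ℂ (V q m)‖ ≤ ε * N + C := by
    intro p hp q hq hpq
    have : ∀ m, V p m * starRingEnd ℂ (V q m) =
        if max p q * m ≤ N then
          (u p * starRingEnd ℂ (u q)) * (a (p * m) * starRingEnd ℂ (a (q * m))) else 0 := by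
      intro m
      have hmax : max p q * m ≤ N ↔ p * m ≤ N ∧ q * m ≤ N := by
        rw [max_mul_of_nonneg _ _ (Nat.zero_le m), max_le_iff]
      simp only [V, hmax]
      by_cases h1 : p * m ≤ N <;> by_cases h2 : q * m ≤ N <;> simp [h1, h2]
      ring
    simp only [this]
    have hmax0 : max p q ≠ 0 := (lt_max_of_lt_left (hP p hp).pos).ne'
    rw [← Finset.sum_filter, hfilter _ hmax0, ← Finset.mul_sum, norm_mul, norm_mul,
      RCLike.norm_conj]
    refine (mul_le_of_le_one_left (norm_nonneg _)
      (mul_le_one₀ (hu p) (norm_nonneg _) (hu q))).trans ((hcorr p hp q hq hpq _).trans ?_)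
    gcongr
    exact Nat.div_le_self _ _
  have hreal : (∑ m ∈ Finset.Icc 1 N, ‖∑ p ∈ P, V p m‖ ^ 2 : ℝ) =
      ‖∑ p ∈ P, ∑ q ∈ P, ∑ m ∈ Finset.Icc 1 N, V p m * starRingEnd ℂ (V q m)‖ := by
    rw [← hexp, Complex.norm_real, Real.norm_of_nonneg]
    exact Finset.sum_nonneg fun _ _ => by positivity
  change (∑ m ∈ Finset.Icc 1 N, ‖∑ p ∈ P, V p m‖ ^ 2 : ℝ) ≤ _
  rw [hreal]
  have hB : 0 ≤ ε * N + C := by positivity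
  calc ‖∑ p ∈ P, ∑ q ∈ P, ∑ m ∈ Finset.Icc 1 N, V p m * starRingEnd ℂ (V q m)‖
      ≤ ∑ p ∈ P, (N * (p : ℝ)⁻¹ + P.card * (ε * N + C)) := by
        refine norm_sum_le_of_le _ fun p hp => ?_
        rw [← Finset.add_sum_erase _ _ hp]
        refine (norm_add_le _ _).trans (add_le_add (hdiag p hp) ?_)
        refine (norm_sum_le_of_le (n := fun _ => ε * N + C) _ fun q hq =>
          hoff p hp q (Finset.mem_of_mem_erase hq) (Finset.ne_of_mem_erase hq).symm).trans ?_
        rw [Finset.sum_const, nsmul_eq_mul]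
        gcongr
        exact Finset.erase_subset _ _
    _ = N * ∑ p ∈ P, (p : ℝ)⁻¹ + P.card ^ 2 * (ε * N + C) := by
        rw [Finset.sum_add_distrib, Finset.sum_const, nsmul_eq_mul, Finset.mul_sum]
        ring

theorem sum_inv_sq_le_two (P : Finset ℕ) : ∑ p ∈ P, ((p : ℝ) ^ 2)⁻¹ ≤ 2 := by
  have h := hasSum_zeta_two
  simp only [one_div] at h
  refine (sum_le_hasSum P (fun _ _ => by positivity) h).trans ?_
  nlinarith [Real.pi_lt_d2, Real.pi_pos]

/-- Dilating a multiplicative function by the primes of a finite set costs at most `4 N`. -/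
theorem norm_sum_dilates_sub_le {P : Finset ℕ} (hP : ∀ p ∈ P, p.Prime) {a u : ℕ → ℂ}
    (hmult : ∀ m n : ℕ, Nat.Coprime m n → u (m * n) = u m * u n)
    (ha : ∀ n, ‖a n‖ ≤ 1) (hu : ∀ n, ‖u n‖ ≤ 1) (N : ℕ) :
    ‖∑ n ∈ Finset.Icc 1 N, a n * u n * ((∑ p ∈ P, if p ∣ n then (1 : ℝ) else 0 : ℝ) : ℂ) -
      ∑ m ∈ Finset.Icc 1 N, u m * ∑ p ∈ P, if p * m ≤ N then u p * a (p * m) else 0‖ ≤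
      4 * N := by
  have h1 : ∑ n ∈ Finset.Icc 1 N, a n * u n * ((∑ p ∈ P, if p ∣ n then (1 : ℝ) else 0 : ℝ) : ℂ) =
      ∑ p ∈ P, ∑ m ∈ Finset.Icc 1 N, if p * m ≤ N then a (p * m) * u (p * m) else 0 := by
    have : ∀ p ∈ P, ∑ m ∈ Finset.Icc 1 N, (if p * m ≤ N then a (p * m) * u (p * m) else 0) =
        ∑ n ∈ Finset.Icc 1 N, if p ∣ n then a n * u n else 0 := fun p hp =>
      (sum_Icc_ite_dvd_eq (hP p hp).ne_zero N fun n => a n * u n).symm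
    rw [Finset.sum_congr rfl this, Finset.sum_comm]
    refine Finset.sum_congr rfl fun n _ => ?_
    push_cast
    rw [Finset.mul_sum]
    refine Finset.sum_congr rfl fun p _ => ?_
    split_ifs <;> simp
  have h2 : ∑ m ∈ Finset.Icc 1 N, u m * ∑ p ∈ P, (if p * m ≤ N then u p * a (p * m) else 0) =
      ∑ p ∈ P, ∑ m ∈ Finset.Icc 1 N, if p * m ≤ N then a (p * m) * (u p * u m) else 0 := by
    rw [Finset.sum_comm]
    refine Finset.sum_congr rfl fun n _ => ?_
    rw [Finset.mul_sum]
    refine Finset.sum_congr rfl fun p _ => ?_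
    split_ifs
    · ring
    · simp
  rw [h1, h2, ← Finset.sum_sub_distrib]
  calc _ ≤ ∑ p ∈ P, 2 * (N * ((p : ℝ) ^ 2)⁻¹) := by
        refine norm_sum_le_of_le _ fun p hp => ?_
        rw [← Finset.sum_sub_distrib]
        have hp0 := (hP p hp).pos
        have hterm : ∀ m ∈ Finset.Icc 1 N,
            ‖(if p * m ≤ N then a (p * m) * u (p * m) else 0) -
              (if p * m ≤ N then a (p * m) * (u p * u m) else 0)‖ ≤
            if m ∈ (Finset.Icc 1 (N / p)).filter (p ∣ ·) then (2 : ℝ) else 0 := by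
          intro m hm
          have hm1 := (Finset.mem_Icc.1 hm).1
          by_cases hle : p * m ≤ N
          · simp only [hle, if_true]
            by_cases hdvd : p ∣ m
            · have hmem : m ∈ (Finset.Icc 1 (N / p)).filter (p ∣ ·) := by
                simp only [Finset.mem_filter, Finset.mem_Icc, Nat.le_div_iff_mul_le hp0]
                exact ⟨⟨hm1, by rwa [mul_comm]⟩, hdvd⟩
              rw [if_pos hmem, ← mul_sub, norm_mul]
              have h3 : ‖u (p * m) - u p * u m‖ ≤ 2 := by
                refine (norm_sub_le _ _).trans ?_
                rw [norm_mul]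
                have := mul_le_one₀ (hu p) (norm_nonneg _) (hu m)
                linarith [hu (p * m)]
              exact (mul_le_of_le_one_left (norm_nonneg _) (ha _)).trans h3
            · rw [hmult p m (((hP p hp).coprime_iff_not_dvd).2 hdvd), sub_self, norm_zero]
              split_ifs <;> norm_num
          · simp only [hle, if_false, sub_self, norm_zero]
            split_ifs <;> norm_num
        refine (norm_sum_le_of_le _ hterm).trans ?_
        rw [← Finset.sum_filter, Finset.sum_const, nsmul_eq_mul, mul_comm]
        refine mul_le_mul_of_nonneg_left ?_ zero_le_two
        have hcard : ((Finset.Icc 1 (N / p)).filter (p ∣ ·)).card = N / p / p :=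
          Nat.Ioc_filter_dvd_card_eq_div (N / p) p
        refine (Nat.cast_le.2 ((Finset.card_le_card fun m hm =>
          (Finset.mem_filter.1 hm).2).trans hcard.le)).trans ?_
        rw [Nat.div_div_eq_div_mul, ← sq, ← div_eq_mul_inv, ← Nat.cast_pow]
        exact Nat.cast_div_le
    _ = 2 * N * ∑ p ∈ P, ((p : ℝ) ^ 2)⁻¹ := by
        rw [Finset.mul_sum]
        exact Finset.sum_congr rfl fun _ _ => by ring
    _ ≤ 2 * N * 2 := by
        gcongr
        exact sum_inv_sq_le_two P
    _ = 4 * N := by ring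

/-- A quantitative form of the Daboussi–Kátai orthogonality criterion. -/
theorem eventually_norm_sum_mul_multiplicative_le {P : Finset ℕ} (hP : ∀ p ∈ P, p.Prime)
    {a u : ℕ → ℂ} (hmult : ∀ m n : ℕ, Nat.Coprime m n → u (m * n) = u m * u n)
    (ha : ∀ n, ‖a n‖ ≤ 1) (hu : ∀ n, ‖u n‖ ≤ 1) {ε L : ℝ} (hε : 0 ≤ ε)
    (hcorr : ∀ p ∈ P, ∀ q ∈ P, p ≠ q → ∀ᶠ M : ℕ in atTop,
      ‖∑ m ∈ Finset.Icc 1 M, a (p * m) * starRingEnd ℂ (a (q * m))‖ ≤ ε * M)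
    (hL : ∑ p ∈ P, (p : ℝ)⁻¹ = L) (hL1 : 1 ≤ L) (hεL : P.card ^ 2 * ε ≤ L) :
    ∀ᶠ N : ℕ in atTop, ‖∑ n ∈ Finset.Icc 1 N, a n * u n‖ ≤ 8 / Real.sqrt L * N := by
  have hL0 : 0 < L := by linarith
  obtain ⟨M₀, hM₀⟩ : ∃ M₀ : ℕ, ∀ M ≥ M₀, ∀ p ∈ P, ∀ q ∈ P, p ≠ q →
      ‖∑ m ∈ Finset.Icc 1 M, a (p * m) * starRingEnd ℂ (a (q * m))‖ ≤ ε * M := by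
    rw [← eventually_atTop]
    simp only [eventually_all_finset, eventually_imp_distrib_left]
    exact hcorr
  have hcorr' : ∀ p ∈ P, ∀ q ∈ P, p ≠ q → ∀ M : ℕ,
      ‖∑ m ∈ Finset.Icc 1 M, a (p * m) * starRingEnd ℂ (a (q * m))‖ ≤ ε * M + M₀ := by
    intro p hp q hq hpq M
    rcases le_total M₀ M with h | h
    · exact (hM₀ M h p hp q hq hpq).trans (by linarith [Nat.cast_nonneg (α := ℝ) M₀])
    · have h1 : ‖∑ m ∈ Finset.Icc 1 M, a (p * m) * starRingEnd ℂ (a (q * m))‖ ≤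
          ∑ m ∈ Finset.Icc 1 M, (1 : ℝ) := by
        refine norm_sum_le_of_le _ fun m _ => ?_
        rw [norm_mul, RCLike.norm_conj]
        exact mul_le_one₀ (ha _) (norm_nonneg _) (ha _)
      have h2 : (M : ℝ) ≤ M₀ := by exact_mod_cast h
      have h3 : 0 ≤ ε * M := by positivity
      simp at h1
      linarith
  obtain ⟨N₀, hN₀⟩ := exists_nat_ge (2 * (P.card : ℝ) + P.card ^ 2 * M₀)
  filter_upwards [eventually_ge_atTop N₀] with N hN
  have hN' : 2 * (P.card : ℝ) + P.card ^ 2 * M₀ ≤ N := hN₀.trans (by exact_mod_cast hN)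
  set s := Real.sqrt L with hs
  have hs0 : 0 < s := Real.sqrt_pos.2 hL0
  have hs1 : 1 ≤ s := by rw [hs]; exact Real.one_le_sqrt.2 hL1
  have hsq : s ^ 2 = L := Real.sq_sqrt hL0.le
  have hPM : (0 : ℝ) ≤ P.card ^ 2 * M₀ := by positivity
  have hP0 : (0 : ℝ) ≤ P.card := by positivity
  let w : ℕ → ℝ := fun n => ∑ p ∈ P, if p ∣ n then (1 : ℝ) else 0
  let V : ℕ → ℂ := fun m => ∑ p ∈ P, if p * m ≤ N then u p * a (p * m) else 0
  have hTK : ∑ n ∈ Finset.Icc 1 N, |w n - L| ≤ 2 * s * N := by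
    have h := turan_kubilius hP N
    rw [hL] at h
    have h' := sum_norm_le_of_sum_sq_le (Finset.Icc 1 N) (fun n => w n - L)
      (A := N + 2 * P.card) hL0 (h.trans (le_of_eq (by ring)))
    rw [Nat.card_Icc, Nat.add_sub_cancel] at h'
    refine h'.trans ?_
    rw [← hs, mul_comm 2 s, mul_assoc]
    gcongr
    linarith
  have hV : ∑ m ∈ Finset.Icc 1 N, ‖V m‖ ≤ 2 * s * N := by
    have h := sum_sq_norm_dilates_le hP ha hu hε hcorr' (Nat.cast_nonneg _) N
    rw [hL] at h
    have h' := sum_norm_le_of_sum_sq_le (Finset.Icc 1 N) (fun m => ‖V m‖)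
      (A := 2 * N + P.card ^ 2 * M₀) hL0 (h.trans ?_)
    · rw [Nat.card_Icc, Nat.add_sub_cancel] at h'
      simp only [abs_norm] at h'
      refine h'.trans ?_
      rw [← hs, mul_comm 2 s, mul_assoc]
      gcongr
      linarith
    · have e1 := mul_le_mul_of_nonneg_right hεL (Nat.cast_nonneg (α := ℝ) N)
      have e2 := mul_le_mul_of_nonneg_right hL1 hPM
      nlinarith
  have hdil := norm_sum_dilates_sub_le hP hmult ha hu N
  have hmain : L * ‖∑ n ∈ Finset.Icc 1 N, a n * u n‖ ≤ 8 * s * N := by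
    have hid : (L : ℂ) * ∑ n ∈ Finset.Icc 1 N, a n * u n =
        (∑ n ∈ Finset.Icc 1 N, a n * u n * (w n : ℂ) - ∑ m ∈ Finset.Icc 1 N, u m * V m) +
        ∑ m ∈ Finset.Icc 1 N, u m * V m -
        ∑ n ∈ Finset.Icc 1 N, a n * u n * ((w n - L : ℝ) : ℂ) := by
      rw [sub_add_cancel, ← Finset.sum_sub_distrib, Finset.mul_sum]
      refine Finset.sum_congr rfl fun n _ => ?_
      push_cast
      ring
    have hnorm : ‖(L : ℂ) * ∑ n ∈ Finset.Icc 1 N, a n * u n‖ =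
        L * ‖∑ n ∈ Finset.Icc 1 N, a n * u n‖ := by
      rw [norm_mul, Complex.norm_real, Real.norm_of_nonneg hL0.le]
    rw [← hnorm, hid]
    have e1 : ‖∑ m ∈ Finset.Icc 1 N, u m * V m‖ ≤ 2 * s * N := by
      refine (norm_sum_le_of_le _ fun m _ => ?_).trans hV
      rw [norm_mul]
      exact mul_le_of_le_one_left (norm_nonneg _) (hu m)
    have e2 : ‖∑ n ∈ Finset.Icc 1 N, a n * u n * ((w n - L : ℝ) : ℂ)‖ ≤ 2 * s * N := by
      refine (norm_sum_le_of_le _ fun n _ => ?_).trans hTK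
      rw [norm_mul, norm_mul, Complex.norm_real, Real.norm_eq_abs]
      exact mul_le_of_le_one_left (abs_nonneg _) (mul_le_one₀ (ha n) (norm_nonneg _) (hu n))
    have e3 : (4 : ℝ) * N ≤ 4 * s * N := by
      gcongr
      linarith
    refine (norm_sub_le _ _).trans ?_
    refine (add_le_add ((norm_add_le _ _).trans (add_le_add hdil e1)) e2).trans ?_
    linarith
  rw [← hsq] at hmain
  rw [div_mul_eq_mul_div, le_div_iff₀ hs0]
  refine le_of_mul_le_mul_left ?_ hs0
  linarith

theorem exists_primes_sum_inv_ge (C : ℝ) :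
    ∃ P : Finset ℕ, (∀ p ∈ P, p.Prime) ∧ C ≤ ∑ p ∈ P, (p : ℝ)⁻¹ := by
  classical
  by_contra! hcon
  refine not_summable_one_div_on_primes (summable_of_sum_le (c := C)
    (fun n => Set.indicator_nonneg (fun _ _ => by positivity) n) ?_)
  intro s
  have h := hcon (s.filter Nat.Prime) (fun p hp => (Finset.mem_filter.1 hp).2)
  rw [Finset.sum_filter] at h
  refine le_trans (Finset.sum_le_sum fun p _ => ?_) h.le
  simp [Set.indicator_apply]

/-- A function bounded by `1` is approximated in `L¹` by continuous functions bounded by `1`. -/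
theorem exists_continuous_norm_le_one_integral_sub_le {Y : Type*} [MetricSpace Y] [CompactSpace Y]
    [MeasurableSpace Y] [BorelSpace Y] {ν : Measure Y} [IsProbabilityMeasure ν] {g : Y → ℂ}
    (hg : AEMeasurable g ν) (hg1 : ∀ᵐ x ∂ν, ‖g x‖ ≤ 1) {δ : ℝ} (hδ : 0 < δ) :
    ∃ g' : Y → ℂ, Continuous g' ∧ (∀ x, ‖g' x‖ ≤ 1) ∧ ∫ x, ‖g x - g' x‖ ∂ν ≤ δ := by
  have hint : Integrable g ν := Integrable.of_bound hg.aestronglyMeasurable 1 hg1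
  obtain ⟨h, hh, hhint⟩ := hint.exists_boundedContinuous_integral_sub_le (half_pos hδ)
  have hmax : ∀ x, 0 < max 1 ‖h x‖ := fun x => lt_max_of_lt_left one_pos
  have hcont : Continuous fun x => (((max 1 ‖h x‖)⁻¹ : ℝ) : ℂ) * h x := by
    refine (Complex.continuous_ofReal.comp ?_).mul h.continuous
    exact (continuous_const.max h.continuous.norm).inv₀ fun x => (hmax x).ne'
  refine ⟨_, hcont, fun x => ?_, ?_⟩
  · rw [norm_mul, Complex.norm_real, Real.norm_of_nonneg (inv_nonneg.2 (hmax x).le),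
      inv_mul_eq_div]
    exact div_le_one_of_le₀ (le_max_right _ _) (hmax x).le
  · calc ∫ x, ‖g x - (((max 1 ‖h x‖)⁻¹ : ℝ) : ℂ) * h x‖ ∂ν
        ≤ ∫ x, 2 * ‖g x - h x‖ ∂ν := by
          refine integral_mono_ae ?_ ((hint.sub hhint).norm.const_mul 2) ?_
          · exact (hint.sub (hcont.integrable_of_hasCompactSupport (.of_compactSpace _))).norm
          · filter_upwards [hg1] with x hx
            have h1 : ‖h x - (((max 1 ‖h x‖)⁻¹ : ℝ) : ℂ) * h x‖ ≤ ‖g x - h x‖ := by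
              rcases le_total ‖h x‖ 1 with hle | hle
              · simp [max_eq_left hle]
              · have h0 : 0 < ‖h x‖ := one_pos.trans_le hle
                rw [max_eq_right hle, ← one_sub_mul, norm_mul, ← Complex.ofReal_one,
                  ← Complex.ofReal_sub, Complex.norm_real, Real.norm_of_nonneg
                  (sub_nonneg.2 (inv_le_one_of_one_le₀ hle)), sub_mul, one_mul,
                  inv_mul_cancel₀ h0.ne']
                have := norm_sub_norm_le (h x) (g x)
                rw [norm_sub_rev] at this
                linarith
            calc _ = ‖(g x - h x) + (h x - (((max 1 ‖h x‖)⁻¹ : ℝ) : ℂ) * h x)‖ := by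
                  rw [sub_add_sub_cancel]
              _ ≤ ‖g x - h x‖ + ‖g x - h x‖ := (norm_add_le _ _).trans (by gcongr)
              _ = 2 * ‖g x - h x‖ := by ring
      _ ≤ δ := by
          rw [integral_const_mul]
          linarith

/-- `g` is an `L¹`-limit of continuous functions whose correlations with `u` along the orbit of
`y` are arbitrarily small. -/
def IsApproxOrthogonal {Y : Type*} [TopologicalSpace Y] [MeasurableSpace Y] (S : Y → Y)
    (ν : Measure Y) (u : ℕ → ℂ) (y : Y) (g : Y → ℂ) : Prop :=
  ∀ η : ℝ, 0 < η → ∃ g' : Y → ℂ, Continuous g' ∧ ∫ x, ‖g x - g' x‖ ∂ν ≤ η ∧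
    ∀ᶠ N : ℕ in atTop, ‖∑ n ∈ Finset.Icc 1 N, g' (S^[n] y) * u n‖ ≤ η * N

section

variable {Y : Type*} [TopologicalSpace Y] [MeasurableSpace Y] {S : Y → Y} {ν : Measure Y}
  {u : ℕ → ℂ} {y : Y}

theorem isApproxOrthogonal_const_of_mean_zero
    (hu_mean : Tendsto (fun N : ℕ => (N : ℂ)⁻¹ * ∑ n ∈ Finset.Icc 1 N, u n) atTop (nhds 0))
    {g : Y → ℂ} {c : ℂ} (hg : g =ᵐ[ν] fun _ => c) : IsApproxOrthogonal S ν u y g := by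
  intro η hη
  refine ⟨fun _ => c, continuous_const, ?_, ?_⟩
  · have : (fun x => ‖g x - c‖) =ᵐ[ν] 0 := by
      filter_upwards [hg] with x hx
      simp [hx]
    rw [integral_congr_ae this]
    simpa using hη.le
  · have h := (hu_mean.const_mul c).norm
    simp only [mul_zero, norm_zero] at h
    filter_upwards [h.eventually_le_const hη, eventually_gt_atTop 0] with N hN hN0
    have hN0' : (0 : ℝ) < N := by exact_mod_cast hN0
    rw [← Finset.mul_sum]
    rw [mul_left_comm, norm_mul, norm_inv, Complex.norm_natCast, inv_mul_le_iff₀ hN0'] at hN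
    rwa [mul_comm η]

theorem IsApproxOrthogonal.congr_ae {g h : Y → ℂ} (hg : IsApproxOrthogonal S ν u y g)
    (hgh : g =ᵐ[ν] h) : IsApproxOrthogonal S ν u y h := by
  intro η hη
  obtain ⟨g', hg'c, hg'δ, hg's⟩ := hg η hη
  refine ⟨g', hg'c, (le_of_eq (integral_congr_ae ?_)).trans hg'δ, hg's⟩
  filter_upwards [hgh] with x hx
  rw [hx]

theorem IsApproxOrthogonal.const_smul {g : Y → ℂ} (hg : IsApproxOrthogonal S ν u y g) (c : ℂ) :
    IsApproxOrthogonal S ν u y (c • g) := by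
  intro η hη
  have hc : 0 < ‖c‖ + 1 := by positivity
  obtain ⟨g', hg'c, hg'δ, hg's⟩ := hg (η / (‖c‖ + 1)) (by positivity)
  have hle : ‖c‖ * (η / (‖c‖ + 1)) ≤ η := by
    rw [mul_div_assoc', div_le_iff₀ hc]
    nlinarith
  refine ⟨fun x => c * g' x, continuous_const.mul hg'c, ?_, ?_⟩
  · simp only [Pi.smul_apply, smul_eq_mul, ← mul_sub, norm_mul]
    rw [integral_const_mul]
    exact (mul_le_mul_of_nonneg_left hg'δ (norm_nonneg c)).trans hle
  · filter_upwards [hg's] with N hN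
    simp only [mul_assoc, ← Finset.mul_sum, norm_mul]
    calc _ ≤ ‖c‖ * (η / (‖c‖ + 1) * N) := by gcongr
      _ = ‖c‖ * (η / (‖c‖ + 1)) * N := by ring
      _ ≤ η * N := by gcongr

end

section

variable {Y : Type*} [MetricSpace Y] [CompactSpace Y] [MeasurableSpace Y] [BorelSpace Y]
  {S : Y → Y} {ν : Measure Y} {u : ℕ → ℂ} {y : Y}

theorem HasQuasiEigenvalue.isApproxOrthogonal (hScont : Continuous S)
    (huniq : UniquelyErgodicWith S ν) (herg : TotallyErgodic S ν)
    (hu_mult : ∀ m n : ℕ, Nat.Coprime m n → u (m * n) = u m * u n) (hu_bd : ∀ n, ‖u n‖ ≤ 1)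
    {c : ℂ} {d : ℕ} {g : Y → ℂ} (hc : ∀ m : ℕ, m ≠ 0 → c ^ m ≠ 1)
    (hg : HasQuasiEigenvalue S ν c (d + 1) g) : IsApproxOrthogonal S ν u y g := by
  intro η hη
  have hν := huniq.1
  obtain ⟨P, hP, hPL⟩ := exists_primes_sum_inv_ge (max 1 ((8 / η) ^ 2))
  have hL1 := (le_max_left _ _).trans hPL
  have hL2 := (le_max_right _ _).trans hPL
  set L := ∑ p ∈ P, (p : ℝ)⁻¹ with hL
  have hL0 : 0 < L := one_pos.trans_le hL1
  obtain ⟨ε, hε0, hεL⟩ : ∃ ε : ℝ, 0 < ε ∧ (P.card : ℝ) ^ 2 * ε ≤ L := by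
    refine ⟨L / ((P.card : ℝ) ^ 2 + 1), by positivity, ?_⟩
    rw [mul_div_assoc', div_le_iff₀ (by positivity)]
    nlinarith
  obtain ⟨g', hg'c, hg'1, hg'δ⟩ := exists_continuous_norm_le_one_integral_sub_le hg.1
    (by filter_upwards [hg.2.1] with x hx using hx.le)
    (δ := min η (ε / 4)) (lt_min hη (by positivity))
  refine ⟨g', hg'c, hg'δ.trans (min_le_left _ _), ?_⟩
  have hcorr : ∀ p ∈ P, ∀ q ∈ P, p ≠ q → ∀ᶠ M : ℕ in atTop, ‖∑ m ∈ Finset.Icc 1 M,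
      g' (S^[p * m] y) * starRingEnd ℂ (g' (S^[q * m] y))‖ ≤ ε * M := fun p hp q hq hpq =>
    eventually_norm_sum_mul_conj_le hScont huniq herg hc hg hg'c hg'1
      (hg'δ.trans (min_le_right _ _)) (by linarith) y (hP p hp).ne_zero (hP q hq).ne_zero hpq
  have key := eventually_norm_sum_mul_multiplicative_le hP (a := fun n => g' (S^[n] y)) hu_mult
    (fun n => hg'1 _) hu_bd hε0.le hcorr hL.symm hL1 hεL
  filter_upwards [key] with N hN
  refine hN.trans (mul_le_mul_of_nonneg_right ?_ (Nat.cast_nonneg N))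
  rw [div_le_iff₀ (Real.sqrt_pos.2 hL0), mul_comm, ← div_le_iff₀ hη]
  exact Real.le_sqrt_of_sq_le hL2

theorem IsApproxOrthogonal.add [IsFiniteMeasure ν] {g h : Y → ℂ} (hgi : Integrable g ν)
    (hhi : Integrable h ν) (hg : IsApproxOrthogonal S ν u y g)
    (hh : IsApproxOrthogonal S ν u y h) : IsApproxOrthogonal S ν u y (g + h) := by
  intro η hη
  obtain ⟨g', hg'c, hg'δ, hg's⟩ := hg (η / 2) (half_pos hη)
  obtain ⟨h', hh'c, hh'δ, hh's⟩ := hh (η / 2) (half_pos hη)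
  have i1 := hgi.sub (hg'c.integrable_of_hasCompactSupport (μ := ν) (.of_compactSpace _))
  have i2 := hhi.sub (hh'c.integrable_of_hasCompactSupport (μ := ν) (.of_compactSpace _))
  refine ⟨fun x => g' x + h' x, hg'c.add hh'c, ?_, ?_⟩
  · calc ∫ x, ‖(g + h) x - (g' x + h' x)‖ ∂ν ≤ ∫ x, (‖g x - g' x‖ + ‖h x - h' x‖) ∂ν := by
          refine integral_mono_of_nonneg (Eventually.of_forall fun _ => norm_nonneg _)
            (i1.norm.add i2.norm) (Eventually.of_forall fun x => ?_)
          simp only [Pi.add_apply, add_sub_add_comm]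
          exact norm_add_le _ _
      _ = ∫ x, ‖g x - g' x‖ ∂ν + ∫ x, ‖h x - h' x‖ ∂ν := integral_add i1.norm i2.norm
      _ ≤ η := by linarith
  · filter_upwards [hg's, hh's] with N h1 h2
    simp only [add_mul, Finset.sum_add_distrib]
    refine (norm_add_le _ _).trans ?_
    linarith

end

/-- If `S` is a uniquely ergodic continuous map of a compact metric space `Y` whose unique
invariant measure `ν` makes `(Y,ν,S)` a system with quasi-discrete spectrum, and if `u` is a
multiplicative function, `|u| ≤ 1`, whose averages tend to `0`, then for every continuous `f`
(no assumption on `∫ f dν`) and every `y ∈ Y`, `(1/N) ∑_{n ≤ N} f(Sⁿ y) u(n) → 0`. -/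
theorem sarnak_quasiDiscreteSpectrum_of_mean_zero
    {Y : Type*} [MetricSpace Y] [CompactSpace Y] [MeasurableSpace Y] [BorelSpace Y]
    (S : Y → Y) (hScont : Continuous S) (ν : Measure Y)
    (huniq : UniquelyErgodicWith S ν)
    (hqds : QuasiDiscreteSpectrum S ν)
    (u : ℕ → ℂ) (hu_mult : ∀ m n : ℕ, Nat.Coprime m n → u (m * n) = u m * u n)
    (hu_bd : ∀ n, ‖u n‖ ≤ 1)
    (hu_mean : Tendsto (fun N : ℕ => (N : ℂ)⁻¹ * ∑ n ∈ Finset.Icc 1 N, u n) atTop (nhds 0))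
    (f : Y → ℂ) (hf : Continuous f) (y : Y) :
    Tendsto (fun N : ℕ => (N : ℂ)⁻¹ * ∑ n ∈ Finset.Icc 1 N, f (S^[n] y) * u n)
      atTop (nhds 0) := by
  have hν := huniq.1
  have herg := hqds.1
  have hspan : ∀ g ∈ Submodule.span ℂ
      {g : Lp ℂ 2 ν | ∃ k : ℕ, ∃ f ∈ quasiEigenfunctions S ν k, ⇑g =ᵐ[ν] f},
      IsApproxOrthogonal S ν u y g := by
    intro g hg
    induction hg using Submodule.span_induction with
    | mem g hg =>
      obtain ⟨k, h, hh, hgh⟩ := hg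
      refine IsApproxOrthogonal.congr_ae ?_ hgh.symm
      rcases quasiEigenfunctions_const_or herg hh with ⟨c, hc⟩ | ⟨d, c, hc, hq⟩
      · exact isApproxOrthogonal_const_of_mean_zero hu_mean hc
      · exact hq.isApproxOrthogonal hScont huniq herg hu_mult hu_bd hc
    | zero => exact isApproxOrthogonal_const_of_mean_zero hu_mean (Lp.coeFn_zero ℂ 2 ν)
    | add g h _ _ hg hh =>
      exact (hg.add ((Lp.memLp g).integrable one_le_two) ((Lp.memLp h).integrable one_le_two)
        hh).congr_ae (Lp.coeFn_add g h).symm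
    | smul c g _ hg => exact (hg.const_smul c).congr_ae (Lp.coeFn_smul c g).symm
  have hfint : Integrable f ν := hf.integrable_of_hasCompactSupport (.of_compactSpace _)
  have hbound : ∀ η : ℝ, 0 < η →
      ∀ᶠ N : ℕ in atTop, ‖∑ n ∈ Finset.Icc 1 N, f (S^[n] y) * u n‖ ≤ 4 * η * N := by
    intro η hη
    have hfL : MemLp f 2 ν :=
      hf.memLp_of_hasCompactSupport (.of_compactSpace _)
    obtain ⟨g, hg, hgf⟩ := Metric.dense_iff.1 hqds.2 (hfL.toLp f) η hη
    rw [Metric.mem_ball, dist_comm, Lp.dist_def] at hg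
    have hgint : Integrable g ν := (Lp.memLp g).integrable one_le_two
    have hfg : ∫ x, ‖f x - g x‖ ∂ν ≤ η := by
      have hmeas : AEStronglyMeasurable (fun x => f x - g x) ν := (hfint.sub hgint).1
      rw [integral_norm_eq_lintegral_enorm hmeas, ← eLpNorm_one_eq_lintegral_enorm]
      refine le_trans ?_ hg.le
      refine ENNReal.toReal_mono ((Lp.memLp _).sub (Lp.memLp g)).eLpNorm_ne_top ?_
      refine (eLpNorm_le_eLpNorm_of_exponent_le one_le_two hmeas).trans (le_of_eq ?_)
      refine eLpNorm_congr_ae ?_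
      filter_upwards [hfL.coeFn_toLp] with x hx
      rw [Pi.sub_apply, hx]
    obtain ⟨g', hg'c, hg'δ, hg's⟩ := hspan g hgf η hη
    have hg'int : Integrable g' ν := hg'c.integrable_of_hasCompactSupport (.of_compactSpace _)
    have hfg' : ∫ x, ‖f x - g' x‖ ∂ν ≤ 2 * η := by
      calc ∫ x, ‖f x - g' x‖ ∂ν ≤ ∫ x, (‖f x - g x‖ + ‖g x - g' x‖) ∂ν := by
            refine integral_mono (hfint.sub hg'int).norm
              ((hfint.sub hgint).norm.add (hgint.sub hg'int).norm) fun x => ?_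
            exact norm_sub_le_norm_sub_add_norm_sub _ _ _
        _ = ∫ x, ‖f x - g x‖ ∂ν + ∫ x, ‖g x - g' x‖ ∂ν :=
            integral_add (hfint.sub hgint).norm (hgint.sub hg'int).norm
        _ ≤ 2 * η := by linarith
    have hφ : Continuous fun x => ((‖f x - g' x‖ : ℝ) : ℂ) := by fun_prop
    have hbirk := eventually_norm_birkhoff_sum_le hScont y hφ (C := 2 * η) (ε := 3 * η)
      (fun ρ hρ hρinv => by
        rw [huniq.2.2 ρ hρ hρinv.map_eq, integral_complex_ofReal, Complex.norm_real,
          Real.norm_of_nonneg (integral_nonneg fun _ => norm_nonneg _)]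
        exact hfg') (by linarith)
    filter_upwards [hg's, hbirk] with N h1 h2
    have h3 : ‖∑ n ∈ Finset.Icc 1 N, (f (S^[n] y) - g' (S^[n] y)) * u n‖ ≤ 3 * η * N := by
      refine le_trans (norm_sum_le_of_le (n := fun n => ‖f (S^[n] y) - g' (S^[n] y)‖) _
        fun n _ => ?_) ((le_of_eq ?_).trans h2)
      · rw [norm_mul]
        exact mul_le_of_le_one_right (norm_nonneg _) (hu_bd n)
      · rw [← Complex.ofReal_sum, Complex.norm_real, Real.norm_of_nonneg]
        exact Finset.sum_nonneg fun _ _ => norm_nonneg _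
    have h4 : ∑ n ∈ Finset.Icc 1 N, f (S^[n] y) * u n =
        ∑ n ∈ Finset.Icc 1 N, (f (S^[n] y) - g' (S^[n] y)) * u n +
          ∑ n ∈ Finset.Icc 1 N, g' (S^[n] y) * u n := by
      rw [← Finset.sum_add_distrib]
      exact Finset.sum_congr rfl fun n _ => by ring
    rw [h4]
    refine (norm_add_le _ _).trans ?_
    linarith
  rw [tendsto_zero_iff_norm_tendsto_zero, Metric.tendsto_atTop]
  intro δ hδ
  obtain ⟨N₀, hN₀⟩ := eventually_atTop.1 (hbound (δ / 8) (by positivity))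
  refine ⟨N₀ + 1, fun N hN => ?_⟩
  have hNpos : (0 : ℝ) < N := by exact_mod_cast (Nat.succ_pos N₀).trans_le hN
  rw [Real.dist_0_eq_abs, abs_norm, norm_mul, norm_inv, Complex.norm_natCast,
    inv_mul_lt_iff₀ hNpos]
  have := hN₀ N (by omega)
  nlinarith
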